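/- Let R be the quotient of ℂ⟨e1,e2,e3⟩ by the two-sided ideal generated by e1e2 + e2e1 − e3, e1e3 + e3e1 − e2, and e2e3 + e3e2. Then h_0 = h_1 = h_2 = h_3 = 1 and h_n = 0 for all n ≥ 4. -/

import Mathlib

open CategoryTheory FreeAlgebra

/-- `Ext^m_R(ℂ,ℂ)` as a ℂ-module, where `ℂ` is an `R`-module via the augmentation `ε`. -/
noncomputable def extC (R : Type) [Ring R] [Algebra ℂ R] (ε : R →ₐ[ℂ] ℂ) (m : ℕ) :
    ModuleCat ℂ :=
  letI : Module R ℂ := Module.compHom ℂ ε.toRingHom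
  ((Ext ℂ (ModuleCat R) m).obj (Opposite.op (ModuleCat.of R ℂ))).obj (ModuleCat.of R ℂ)

/-- `h_m = dim_ℂ Ext^m_R(ℂ,ℂ)`. -/
noncomputable def extDim (R : Type) [Ring R] [Algebra ℂ R] (ε : R →ₐ[ℂ] ℂ) (m : ℕ) : ℕ :=
  Module.finrank ℂ (extC R ε m)

/-- Relations: `e1e2 + e2e1 = e3`, `e1e3 + e3e1 = e2`, `e2e3 + e3e2 = 0`. -/
inductive CRel : FreeAlgebra ℂ (Fin 3) → FreeAlgebra ℂ (Fin 3) → Prop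
  | r12 : CRel (ι ℂ 0 * ι ℂ 1 + ι ℂ 1 * ι ℂ 0) (ι ℂ 2)
  | r13 : CRel (ι ℂ 0 * ι ℂ 2 + ι ℂ 2 * ι ℂ 0) (ι ℂ 1)
  | r23 : CRel (ι ℂ 1 * ι ℂ 2 + ι ℂ 2 * ι ℂ 1) 0

/-!
Write `x, y, z` for `e1, e2, e3`. The trivial module has a Koszul-type resolution
`0 → R → R ^ 3 → R ^ 3 → R → ℂ`, whose differentials are given by the generators, by the three
relations, and by the single overlap `z * y * x`. Since `Ext` is the cohomology of the complex
obtained by applying `ε` to the matrices, and `ε` kills all entries except the two `-1` coming from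
the linear terms of the relations, the scalar matrices have ranks `0, 2, 0`, and the Betti numbers
are `1, 3 - 2, 3 - 2, 1`.

Exactness rests on the Poincaré–Birkhoff–Witt basis `x ^ a * y ^ b * z ^ c`. The monomials are
independent because `R` acts on formal normal forms as by left multiplication; the action is easy to
write down and verify on `y + z` and `y - z`, which commute with `x` up to the substitutions
`x ↦ 1 - x` and `x ↦ -1 - x` and have the same square.
-/

section GeneralAlgebra

open Polynomial

variable {k A : Type*} [CommRing k] [Ring A] [Algebra k A]

lemma mul_aeval_of_mul_eq {w x : A} {q : k[X]} (h : w * x = aeval x q * w) (p : k[X]) :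
    w * aeval x p = aeval x (aeval q p) * w := by
  induction p using Polynomial.induction_on with
  | C a => simp [Algebra.commutes]
  | add p₁ p₂ h₁ h₂ => simp only [map_add, mul_add, add_mul, h₁, h₂]
  | monomial n a ih =>
    rw [pow_succ, ← mul_assoc, map_mul (aeval x) (C a * X ^ n), map_mul (aeval q) (C a * X ^ n),
      map_mul (aeval x) (aeval q _), aeval_X, aeval_X, ← mul_assoc, ih, mul_assoc, h, mul_assoc]

lemma eq_top_of_adjoin_eq_top_of_mul_mem {s : Set A} (hs : Algebra.adjoin k s = ⊤)
    {S : Submodule k A} (one_mem : 1 ∈ S) (mul_mem : ∀ a ∈ s, ∀ b ∈ S, a * b ∈ S) : S = ⊤ := by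
  have mul_mem' (a : A) (ha : a ∈ Algebra.adjoin k s) : ∀ b ∈ S, a * b ∈ S := by
    induction ha using Algebra.adjoin_induction with
    | mem a ha => exact mul_mem a ha
    | algebraMap c => exact fun b hb => by simpa [← Algebra.smul_def] using S.smul_mem c hb
    | add a a' _ _ h h' => exact fun b hb => by simpa [add_mul] using S.add_mem (h b hb) (h' b hb)
    | mul a a' _ _ h h' => exact fun b hb => by simpa [mul_assoc] using h _ (h' b hb)
  refine eq_top_iff.2 fun a _ => ?_
  simpa using mul_mem' a (hs ▸ Algebra.mem_top) 1 one_mem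

end GeneralAlgebra

/-! ### Ext of the trivial module from a free resolution -/

section Homology

universe u v

lemma finrank_homology_add_finrank_range_add_finrank_range {k : Type u} [Field k]
    (S : ShortComplex (ModuleCat.{v} k)) [Module.Finite k S.X₂] :
    Module.finrank k S.homology + Module.finrank k (LinearMap.range S.f.hom) +
      Module.finrank k (LinearMap.range S.g.hom) = Module.finrank k S.X₂ := by
  have boundaries : Module.finrank k (LinearMap.range S.moduleCatToCycles) =
      Module.finrank k (LinearMap.range S.f.hom) := by
    rw [← Submodule.finrank_map_subtype_eq, ← LinearMap.range_comp]
    rfl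
  have homology_eq : Module.finrank k S.homology =
      Module.finrank k (LinearMap.ker S.g.hom ⧸ LinearMap.range S.moduleCatToCycles) :=
    S.moduleCatHomologyIso.toLinearEquiv.finrank_eq
  have quotient := Submodule.finrank_quotient_add_finrank (LinearMap.range S.moduleCatToCycles)
  have rank_nullity := LinearMap.finrank_range_add_finrank_ker S.g.hom
  omega

lemma quasiIso_toSingle₀Equiv_symm {C : Type u} [Category.{v} C] [Abelian C]
    {K : ChainComplex C ℕ} {T : C} (p : K.X 0 ⟶ T) [Epi p] (w : K.d 1 0 ≫ p = 0)
    (exact_zero : (ShortComplex.mk (K.d 1 0) p w).Exact)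
    (exact_succ : ∀ n, (ShortComplex.mk (K.d (n + 2) (n + 1)) (K.d (n + 1) n) (by simp)).Exact) :
    QuasiIso ((ChainComplex.toSingle₀Equiv K T).symm ⟨p, w⟩) := by
  refine ⟨fun n => ?_⟩
  cases n with
  | zero =>
    rw [ChainComplex.quasiIsoAt₀_iff, ShortComplex.quasiIso_iff_of_zeros']
    · simpa using! (⟨exact_zero, ‹Epi p›⟩ : _ ∧ Epi p)
    · exact K.shape 0 0 (by simp)
    all_goals rfl
  | succ n =>
    rw [quasiIsoAt_iff_exactAt' _ _ (ChainComplex.exactAt_succ_single_obj _ _),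
      HomologicalComplex.exactAt_iff' _ (n + 2) (n + 1) n (by simp) (by simp)]
    exact exact_succ n

end Homology

section FreeResolution

universe u

open Matrix ModuleCat

variable {k R : Type u} [Field k] [Ring R] [Algebra k R]

/-- The base field as a left module over an augmented algebra. -/
noncomputable def trivialModule (ε : R →ₐ[k] k) : ModuleCat.{u} R :=
  letI : Module R k := Module.compHom k ε.toRingHom
  ModuleCat.of R k

/-- `Ext^n_R(k, k)`, which for `k = ℂ` unfolds to `extC R ε n`. -/
noncomputable abbrev trivialExt (ε : R →ₐ[k] k) (n : ℕ) : ModuleCat k :=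
  ((Ext k (ModuleCat R) n).obj (.op (trivialModule ε))).obj (trivialModule ε)

/-- `trivialModule ε` is `k`, and it is so `k`-linearly because `ε` is a map of `k`-algebras. -/
noncomputable def trivialModuleEquiv (ε : R →ₐ[k] k) : trivialModule ε ≃ₗ[k] k where
  toFun a := a
  invFun a := a
  map_add' _ _ := rfl
  map_smul' c a := congrArg (· * (show k from a)) (ε.commutes c)

lemma trivialModuleEquiv_smul (ε : R →ₐ[k] k) (r : R) (a : trivialModule ε) :
    trivialModuleEquiv ε (r • a) = ε r * trivialModuleEquiv ε a :=
  rfl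

/-- A morphism from a free module to the trivial module, as the vector of the images of the
standard basis. -/
noncomputable def homTrivialModuleEquiv (ε : R →ₐ[k] k) (m : ℕ) :
    (ModuleCat.of R (Fin m → R) ⟶ trivialModule ε) ≃ₗ[k] (Fin m → k) :=
  (ModuleCat.homLinearEquiv ≪≫ₗ ((Pi.basisFun R (Fin m)).constr k).symm) ≪≫ₗ
    LinearEquiv.piCongrRight fun _ => trivialModuleEquiv ε

lemma homTrivialModuleEquiv_apply (ε : R →ₐ[k] k) {m : ℕ}
    (f : ModuleCat.of R (Fin m → R) ⟶ trivialModule ε) (i : Fin m) :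
    homTrivialModuleEquiv ε m f i = trivialModuleEquiv ε (f.hom (Pi.single i 1)) := by
  simp only [homTrivialModuleEquiv, LinearEquiv.trans_apply, LinearEquiv.piCongrRight_apply,
    Module.Basis.constr_symm_apply, Pi.basisFun_apply]
  rfl

lemma trivialModuleEquiv_hom_apply (ε : R →ₐ[k] k) {m : ℕ}
    (f : ModuleCat.of R (Fin m → R) ⟶ trivialModule ε) (v : Fin m → R) :
    trivialModuleEquiv ε (f.hom v) = (ε ∘ v) ⬝ᵥ homTrivialModuleEquiv ε m f := by
  conv_lhs => rw [← (Pi.basisFun R (Fin m)).sum_repr v]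
  simp [trivialModuleEquiv_smul, dotProduct, homTrivialModuleEquiv_apply]

lemma homTrivialModuleEquiv_comp (ε : R →ₐ[k] k) {m n : ℕ} (M : Matrix (Fin m) (Fin n) R)
    (f : ModuleCat.of R (Fin n → R) ⟶ trivialModule ε) :
    homTrivialModuleEquiv ε m (ModuleCat.ofHom (toLinearMapRight' M) ≫ f) =
      M.map ε *ᵥ homTrivialModuleEquiv ε n f := by
  ext i
  calc homTrivialModuleEquiv ε m (ModuleCat.ofHom (toLinearMapRight' M) ≫ f) i
    _ = trivialModuleEquiv ε (f.hom (Pi.single i 1 ᵥ* M)) := homTrivialModuleEquiv_apply ε _ i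
    _ = trivialModuleEquiv ε (f.hom (M i)) := by rw [single_one_vecMul]; rfl
    _ = (M.map ε *ᵥ homTrivialModuleEquiv ε n f) i := trivialModuleEquiv_hom_apply ε f (M i)

/-- A resolution of the trivial module of an augmented algebra `(R, ε)` by free left modules of
finite rank. As `R` need not be commutative, an element of `R ^ rank n` is a row vector and the
differential multiplies it by `diff n` on the right; the augmentation `R ^ rank 0 → k` sends the
standard basis to `aug`. -/
structure FreeResolution (ε : R →ₐ[k] k) where
  rank : ℕ → ℕ
  diff (n : ℕ) : Matrix (Fin (rank (n + 1))) (Fin (rank n)) R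
  aug : Fin (rank 0) → k
  aug_ne_zero : aug ≠ 0
  map_diff_zero_mulVec_aug : (diff 0).map ε *ᵥ aug = 0
  diff_mul_diff (n : ℕ) : diff (n + 1) * diff n = 0
  exact_zero (v : Fin (rank 0) → R) : (ε ∘ v) ⬝ᵥ aug = 0 → ∃ w, w ᵥ* diff 0 = v
  exact_succ (n : ℕ) (v : Fin (rank (n + 1)) → R) :
    v ᵥ* diff n = 0 → ∃ w, w ᵥ* diff (n + 1) = v

namespace FreeResolution

variable {ε : R →ₐ[k] k} (F : FreeResolution ε)

/-- The free module in degree `n` of a free resolution. -/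
noncomputable abbrev obj (n : ℕ) : ModuleCat.{u} R := ModuleCat.of R (Fin (F.rank n) → R)

/-- The differential of a free resolution as a morphism of modules. -/
noncomputable def d (n : ℕ) : F.obj (n + 1) ⟶ F.obj n :=
  ModuleCat.ofHom (toLinearMapRight' (F.diff n))

lemma d_comp_d (n : ℕ) : F.d (n + 1) ≫ F.d n = 0 := by
  rw [d, d, ← ModuleCat.ofHom_comp, ← toLinearMapRight'_mul, F.diff_mul_diff, map_zero]
  rfl

/-- The augmentation of a free resolution as a morphism of modules. -/
noncomputable def π : F.obj 0 ⟶ trivialModule ε :=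
  (homTrivialModuleEquiv ε (F.rank 0)).symm F.aug

lemma trivialModuleEquiv_π_apply (v : Fin (F.rank 0) → R) :
    trivialModuleEquiv ε (F.π.hom v) = (ε ∘ v) ⬝ᵥ F.aug := by
  rw [trivialModuleEquiv_hom_apply, π, LinearEquiv.apply_symm_apply]

lemma d_comp_π : F.d 0 ≫ F.π = 0 := by
  apply (homTrivialModuleEquiv ε (F.rank 1)).injective
  rw [d, homTrivialModuleEquiv_comp, π, LinearEquiv.apply_symm_apply,
    F.map_diff_zero_mulVec_aug, map_zero]

instance : Epi F.π := by
  rw [ModuleCat.epi_iff_surjective]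
  intro t
  obtain ⟨i, hi⟩ := Function.ne_iff.mp F.aug_ne_zero
  let c := algebraMap k R (trivialModuleEquiv ε t / F.aug i)
  have map_single : ε ∘ Pi.single i c = Pi.single i (ε c) :=
    funext (Pi.apply_single (fun _ => ε) (fun _ => map_zero ε) i c)
  refine ⟨Pi.single i c, (trivialModuleEquiv ε).injective
    ((F.trivialModuleEquiv_π_apply _).trans ?_)⟩
  rw [map_single, single_dotProduct, ε.commutes, Algebra.algebraMap_self_apply,
    div_mul_cancel₀ _ hi]

lemma exact_d_π : (ShortComplex.mk (F.d 0) F.π F.d_comp_π).Exact := by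
  rw [ShortComplex.moduleCat_exact_iff]
  intro v hv
  refine F.exact_zero v ?_
  rw [← trivialModuleEquiv_π_apply]
  exact (congrArg _ hv).trans (map_zero _)

lemma exact_d_d (n : ℕ) : (ShortComplex.mk (F.d (n + 1)) (F.d n) (F.d_comp_d n)).Exact := by
  rw [ShortComplex.moduleCat_exact_iff]
  exact F.exact_succ n

/-- The chain complex of free modules underlying a free resolution. -/
noncomputable def complex : ChainComplex (ModuleCat.{u} R) ℕ :=
  ChainComplex.of F.obj F.d F.d_comp_d

lemma complex_d (n : ℕ) : F.complex.d (n + 1) n = F.d n :=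
  ChainComplex.of_d _ _ _

/-- A free resolution as a projective resolution in the category of modules. -/
noncomputable def projectiveResolution : ProjectiveResolution (trivialModule ε) where
  complex := F.complex
  projective n := ModuleCat.projective_of_free (Pi.basisFun R (Fin (F.rank n)))
  π := (ChainComplex.toSingle₀Equiv F.complex _).symm
    ⟨F.π, by rw [complex_d]; exact F.d_comp_π⟩
  quasiIso := by
    have : Epi (X := F.complex.X 0) F.π := inferInstanceAs (Epi F.π)
    apply quasiIso_toSingle₀Equiv_symm (K := F.complex)
    · have := F.exact_d_π
      simp only [← complex_d] at this
      exact this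
    · intro n
      have := F.exact_d_d n
      simp only [← complex_d] at this
      exact this

/-- The cochain complex `Hom_R(F, k)`. -/
noncomputable abbrev cochains : CochainComplex (ModuleCat k) ℕ :=
  F.complex.linearYonedaObj k (trivialModule ε)

/-- The cochains of degree `n` in coordinates. -/
noncomputable def cochainsEquiv (n : ℕ) : F.cochains.X n ≃ₗ[k] (Fin (F.rank n) → k) :=
  homTrivialModuleEquiv ε (F.rank n)

lemma cochainsEquiv_d (n : ℕ) (f : F.cochains.X n) :
    F.cochainsEquiv (n + 1) (F.cochains.d n (n + 1) f) =
      (F.diff n).map ε *ᵥ F.cochainsEquiv n f := by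
  have d_eq : F.cochains.d n (n + 1) f = F.d n ≫ (show F.obj n ⟶ trivialModule ε from f) :=
    congrArg (· ≫ (show F.obj n ⟶ trivialModule ε from f)) (F.complex_d n)
  rw [d_eq]
  exact homTrivialModuleEquiv_comp ε (F.diff n) f

lemma finrank_range_cochains_d (n : ℕ) :
    Module.finrank k (LinearMap.range (F.cochains.d n (n + 1)).hom) =
      ((F.diff n).map ε).rank := by
  have conj : (F.cochainsEquiv (n + 1)).toLinearMap ∘ₗ (F.cochains.d n (n + 1)).hom =
      ((F.diff n).map ε).mulVecLin ∘ₗ (F.cochainsEquiv n).toLinearMap :=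
    LinearMap.ext (F.cochainsEquiv_d n)
  have range_eq := congrArg LinearMap.range conj
  rw [LinearMap.range_comp, LinearMap.range_comp_of_range_eq_top _ (LinearEquiv.range _)]
    at range_eq
  rw [Matrix.rank, ← range_eq, LinearEquiv.finrank_map_eq]

lemma finrank_trivialExt_add_finrank_range_add_rank (n : ℕ) :
    Module.finrank k (trivialExt ε n) +
      Module.finrank k (LinearMap.range (F.cochains.d ((ComplexShape.up ℕ).prev n) n).hom) +
      ((F.diff n).map ε).rank = F.rank n := by
  have ext_eq : Module.finrank k (trivialExt ε n) = Module.finrank k (F.cochains.homology n) :=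
    (F.projectiveResolution.isoExt n (trivialModule ε)).toLinearEquiv.finrank_eq
  have dim_eq : Module.finrank k (F.cochains.X n) = F.rank n := by
    rw [(F.cochainsEquiv n).finrank_eq, Module.finrank_fin_fun]
  have : Module.Finite k (F.cochains.sc n).X₂ := Module.Finite.equiv (F.cochainsEquiv n).symm
  rw [ext_eq, ← F.finrank_range_cochains_d, ← dim_eq, ← CochainComplex.next ℕ n]
  exact finrank_homology_add_finrank_range_add_finrank_range (F.cochains.sc n)

theorem finrank_trivialExt_zero_add_rank :
    Module.finrank k (trivialExt ε 0) + ((F.diff 0).map ε).rank = F.rank 0 := by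
  have d_eq_zero : F.cochains.d ((ComplexShape.up ℕ).prev 0) 0 = 0 :=
    F.cochains.shape _ _ (by simp)
  have h := F.finrank_trivialExt_add_finrank_range_add_rank 0
  rwa [d_eq_zero, ModuleCat.hom_zero, LinearMap.range_zero, finrank_bot, add_zero] at h

theorem finrank_trivialExt_succ_add_rank_add_rank (n : ℕ) :
    Module.finrank k (trivialExt ε (n + 1)) + ((F.diff n).map ε).rank +
      ((F.diff (n + 1)).map ε).rank = F.rank (n + 1) := by
  have h := F.finrank_trivialExt_add_finrank_range_add_rank (n + 1)
  rwa [CochainComplex.prev_nat_succ, finrank_range_cochains_d] at h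

end FreeResolution

end FreeResolution

/-! ### The color algebra and its universal property -/

/-- The algebra `R` of the statement. It is a definition rather than an abbreviation so that `rw`
and `simp` meet only its ring and algebra instances, and not those that `RingQuot` has for the
single operations. -/
def ColorAlgebra : Type := RingQuot CRel

namespace ColorAlgebra

open Polynomial

noncomputable instance : Ring ColorAlgebra := inferInstanceAs (Ring (RingQuot CRel))

noncomputable instance : Algebra ℂ ColorAlgebra := inferInstanceAs (Algebra ℂ (RingQuot CRel))

/-- The quotient map from the free algebra. -/
noncomputable def mk : FreeAlgebra ℂ (Fin 3) →ₐ[ℂ] ColorAlgebra := RingQuot.mkAlgHom ℂ CRel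

lemma mk_surjective : Function.Surjective mk :=
  RingQuot.mkAlgHom_surjective ℂ CRel

lemma mk_eq_mk_of_rel {a b : FreeAlgebra ℂ (Fin 3)} (h : CRel a b) : mk a = mk b :=
  RingQuot.mkAlgHom_rel ℂ h

/-- The generator `e1`. -/
noncomputable def x : ColorAlgebra := mk (ι ℂ 0)

/-- The generator `e2`. -/
noncomputable def y : ColorAlgebra := mk (ι ℂ 1)

/-- The generator `e3`. -/
noncomputable def z : ColorAlgebra := mk (ι ℂ 2)

lemma x_mul_y_add_y_mul_x : x * y + y * x = z := by
  simpa only [map_add, map_mul] using! mk_eq_mk_of_rel CRel.r12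

lemma x_mul_z_add_z_mul_x : x * z + z * x = y := by
  simpa only [map_add, map_mul] using! mk_eq_mk_of_rel CRel.r13

lemma y_mul_z_add_z_mul_y : y * z + z * y = 0 := by
  simpa only [map_add, map_mul, map_zero] using! mk_eq_mk_of_rel CRel.r23

lemma y_mul_x : y * x = z - x * y :=
  eq_sub_of_add_eq' x_mul_y_add_y_mul_x

lemma z_mul_x : z * x = y - x * z :=
  eq_sub_of_add_eq' x_mul_z_add_z_mul_x

lemma z_mul_y : z * y = -(y * z) :=
  eq_neg_of_add_eq_zero_right y_mul_z_add_z_mul_y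

lemma adjoin_generators : Algebra.adjoin ℂ {x, y, z} = ⊤ := by
  have range_eq : mk '' Set.range (ι ℂ) = {x, y, z} := by
    ext a
    simp [Fin.exists_fin_succ, x, y, z, eq_comm]
  rw [← range_eq, ← AlgHom.map_adjoin, FreeAlgebra.adjoin_range_ι, Algebra.map_top,
    AlgHom.range_eq_top]
  exact mk_surjective

section Lift

variable {A : Type*} [Ring A] [Algebra ℂ A]

/-- The universal property of the color algebra. -/
noncomputable def lift (a b c : A) (hab : a * b + b * a = c) (hac : a * c + c * a = b)
    (hbc : b * c + c * b = 0) : ColorAlgebra →ₐ[ℂ] A :=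
  RingQuot.liftAlgHom ℂ ⟨FreeAlgebra.lift ℂ ![a, b, c], fun _ _ r => by
    cases r <;> simp [hab, hac, hbc]⟩

variable {a b c : A} (hab : a * b + b * a = c) (hac : a * c + c * a = b)
  (hbc : b * c + c * b = 0)

lemma lift_mk (r : FreeAlgebra ℂ (Fin 3)) :
    lift a b c hab hac hbc (mk r) = FreeAlgebra.lift ℂ ![a, b, c] r :=
  RingQuot.liftAlgHom_mkAlgHom_apply ..

lemma lift_x : lift a b c hab hac hbc x = a := by
  simp [x, lift_mk]

lemma lift_y : lift a b c hab hac hbc y = b := by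
  simp [y, lift_mk]

lemma lift_z : lift a b c hab hac hbc z = c := by
  simp [z, lift_mk]

/-- The universal property in terms of the semi-invariants `y + z` and `y - z`: their images `u`
and `v` commute with the image of `x` up to an affine substitution and have equal squares. -/
noncomputable def liftSemiInvariants (a u v : A) (hu : u * a = (1 - a) * u)
    (hv : v * a = (-1 - a) * v) (huv : u * u = v * v) : ColorAlgebra →ₐ[ℂ] A :=
  lift a ((1 / 2 : ℂ) • (u + v)) ((1 / 2 : ℂ) • (u - v))
    (by
      rw [mul_smul_comm, smul_mul_assoc, ← smul_add, add_mul, hu, hv]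
      noncomm_ring)
    (by
      rw [mul_smul_comm, smul_mul_assoc, ← smul_add, sub_mul, hu, hv]
      noncomm_ring)
    (by
      have : (u + v) * (u - v) + (u - v) * (u + v) = 2 • (u * u - v * v) := by noncomm_ring
      rw [smul_mul_smul_comm, smul_mul_smul_comm, ← smul_add, this, huv, sub_self, smul_zero,
        smul_zero])

end Lift

/-! ### The Poincaré–Birkhoff–Witt theorem -/

/-- Formal normal forms: the value at `(b, c)` is the coefficient of `y ^ b * z ^ c`, a polynomial
in `x` written on the left. -/
abbrev NormalForm : Type := (ℕ × ℕ) →₀ ℂ[X]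

namespace NormalForm

/-- Left multiplication by `x` on normal forms. -/
noncomputable def mulX : Module.End ℂ NormalForm :=
  Finsupp.mapRange.linearMap (LinearMap.mulLeft ℂ X)

/-- Left multiplication by `y + s * z` on normal forms, for `s = ± 1`. The formula comes from
`(y + s * z) * x = (s - x) * (y + s * z)` and `z * y ^ b = (-1) ^ b * y ^ b * z`. -/
noncomputable def mulSemi (s : ℂ) : Module.End ℂ NormalForm :=
  Finsupp.lsum ℂ fun bc => (Finsupp.lsingle (bc.1 + 1, bc.2) +
    (s * (-1) ^ bc.1) • Finsupp.lsingle (bc.1, bc.2 + 1)) ∘ₗ (aeval (C s - X)).toLinearMap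

lemma mulX_single (bc : ℕ × ℕ) (p : ℂ[X]) :
    mulX (Finsupp.single bc p) = Finsupp.single bc (X * p) := by
  simp [mulX]

lemma mulSemi_single (s : ℂ) (b c : ℕ) (p : ℂ[X]) :
    mulSemi s (Finsupp.single (b, c) p) =
      Finsupp.single (b + 1, c) (aeval (C s - X) p) +
        (s * (-1) ^ b) • Finsupp.single (b, c + 1) (aeval (C s - X) p) := by
  simp [mulSemi]

lemma linearMap_ext {M : Type*} [AddCommMonoid M] [Module ℂ M] {f g : NormalForm →ₗ[ℂ] M}
    (h : ∀ b c p, f (Finsupp.single (b, c) p) = g (Finsupp.single (b, c) p)) : f = g :=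
  Finsupp.lhom_ext fun bc p => h bc.1 bc.2 p

lemma mulSemi_mul_mulX (s : ℂ) :
    mulSemi s * mulX = (algebraMap ℂ _ s - mulX) * mulSemi s := by
  refine linearMap_ext fun b c p => ?_
  simp only [Module.End.mul_apply, mulX_single, mulSemi_single, map_mul, aeval_X,
    LinearMap.sub_apply, Module.algebraMap_end_apply, map_add, map_smul, sub_mul, C_mul',
    Finsupp.single_sub, ← Finsupp.smul_single]

lemma aeval_sub_X_aeval_sub_X (s : ℂ) (p : ℂ[X]) :
    aeval (C s - X) (aeval (C s - X) p) = p := by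
  rw [← aeval_algHom_apply]
  simp

lemma mulSemi_mulSemi_single {s : ℂ} (hs : s ^ 2 = 1) (b c : ℕ) (p : ℂ[X]) :
    mulSemi s (mulSemi s (Finsupp.single (b, c) p)) =
      Finsupp.single (b + 2, c) p + Finsupp.single (b, c + 2) p := by
  have sq_eq_one : (s * (-1) ^ b) * (s * (-1) ^ b) = 1 := by
    rw [mul_mul_mul_comm, ← sq, hs, one_mul, ← mul_pow]
    simp
  simp only [mulSemi_single, map_add, map_smul, aeval_sub_X_aeval_sub_X, smul_add, smul_smul,
    sq_eq_one, pow_succ]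
  module

lemma mulSemi_one_mul_self : mulSemi 1 * mulSemi 1 = mulSemi (-1) * mulSemi (-1) :=
  linearMap_ext fun b c p => by
    simp only [Module.End.mul_apply, mulSemi_mulSemi_single (one_pow 2),
      mulSemi_mulSemi_single neg_one_sq]

lemma aeval_mulX_single (p q : ℂ[X]) (bc : ℕ × ℕ) :
    aeval mulX p (Finsupp.single bc q) = Finsupp.single bc (p * q) := by
  induction p using Polynomial.induction_on generalizing q with
  | C a => simp [C_mul']
  | add p₁ p₂ h₁ h₂ => simp [h₁, h₂, add_mul]
  | monomial n a ih =>
    rw [pow_succ, ← mul_assoc, map_mul, aeval_X, Module.End.mul_apply, mulX_single, ih,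
      mul_assoc (C a * X ^ n)]

end NormalForm

open NormalForm

/-- The action of the color algebra on normal forms by left multiplication. -/
noncomputable def leftAction : ColorAlgebra →ₐ[ℂ] Module.End ℂ NormalForm :=
  liftSemiInvariants mulX (mulSemi 1) (mulSemi (-1))
    (by simpa using mulSemi_mul_mulX 1) (by simpa using mulSemi_mul_mulX (-1))
    mulSemi_one_mul_self

lemma leftAction_x : leftAction x = mulX :=
  lift_x _ _ _

lemma leftAction_y : leftAction y = (1 / 2 : ℂ) • (mulSemi 1 + mulSemi (-1)) :=
  lift_y _ _ _

lemma leftAction_z : leftAction z = (1 / 2 : ℂ) • (mulSemi 1 - mulSemi (-1)) :=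
  lift_z _ _ _

lemma leftAction_y_single_one (b c : ℕ) :
    leftAction y (Finsupp.single (b, c) 1) = Finsupp.single (b + 1, c) 1 := by
  simp only [leftAction_y, LinearMap.smul_apply, LinearMap.add_apply, mulSemi_single, map_one]
  module

lemma leftAction_z_single_one (c : ℕ) :
    leftAction z (Finsupp.single (0, c) 1) = Finsupp.single (0, c + 1) 1 := by
  simp only [leftAction_z, LinearMap.smul_apply, LinearMap.sub_apply, mulSemi_single, map_one]
  module

/-- The element of the color algebra with a given normal form. -/
noncomputable def ofNormalForm : NormalForm →ₗ[ℂ] ColorAlgebra :=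
  Finsupp.lsum ℂ fun bc => LinearMap.mulRight ℂ (y ^ bc.1 * z ^ bc.2) ∘ₗ (aeval x).toLinearMap

lemma ofNormalForm_single (b c : ℕ) (p : ℂ[X]) :
    ofNormalForm (Finsupp.single (b, c) p) = aeval x p * (y ^ b * z ^ c) := by
  simp [ofNormalForm, mul_assoc]

lemma leftAction_aeval_mul_pow_mul_pow (p : ℂ[X]) (b c : ℕ) :
    leftAction (aeval x p * (y ^ b * z ^ c)) (Finsupp.single (0, 0) 1) =
      Finsupp.single (b, c) p := by
  have z_pow : leftAction (z ^ c) (Finsupp.single (0, 0) 1) = Finsupp.single (0, c) 1 := by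
    induction c with
    | zero => simp
    | succ c ih => rw [pow_succ', map_mul, Module.End.mul_apply, ih, leftAction_z_single_one]
  have y_pow : leftAction (y ^ b) (Finsupp.single (0, c) 1) = Finsupp.single (b, c) 1 := by
    induction b with
    | zero => simp
    | succ b ih => rw [pow_succ', map_mul, Module.End.mul_apply, ih, leftAction_y_single_one]
  rw [map_mul, map_mul, Module.End.mul_apply, Module.End.mul_apply, z_pow, y_pow,
    ← aeval_algHom_apply, leftAction_x, aeval_mulX_single, mul_one]

lemma ofNormalForm_injective : Function.Injective ofNormalForm := by
  have left_inverse : LinearMap.applyₗ (Finsupp.single (0, 0) 1) ∘ₗ leftAction.toLinearMap ∘ₗ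
      ofNormalForm = LinearMap.id :=
    linearMap_ext fun b c p => by
      simpa [ofNormalForm_single] using leftAction_aeval_mul_pow_mul_pow p b c
  exact Function.LeftInverse.injective (g := fun a => leftAction a (Finsupp.single (0, 0) 1))
    (LinearMap.congr_fun left_inverse)

lemma z_mul_y_pow (b : ℕ) : z * y ^ b = (-1 : ℂ) ^ b • (y ^ b * z) := by
  induction b with
  | zero => simp
  | succ b ih =>
    rw [pow_succ, ← mul_assoc, ih, smul_mul_assoc, mul_assoc, z_mul_y, mul_neg, ← mul_assoc,
      pow_succ, mul_neg_one, neg_smul, smul_neg]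

lemma semiInvariant_mul_x {s : ℂ} (hs : s ^ 2 = 1) :
    (y + s • z) * x = aeval x (C s - X) * (y + s • z) := by
  rw [map_sub, aeval_C, aeval_X, sub_mul, ← Algebra.smul_def, smul_add, smul_smul, ← sq, hs,
    one_smul, add_mul, smul_mul_assoc, y_mul_x, z_mul_x, mul_add, mul_smul_comm, smul_sub]
  abel

lemma ofNormalForm_mulX (v : NormalForm) : ofNormalForm (mulX v) = x * ofNormalForm v := by
  have : ofNormalForm ∘ₗ mulX = LinearMap.mulLeft ℂ x ∘ₗ ofNormalForm :=
    linearMap_ext fun b c p => by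
      simp only [LinearMap.comp_apply, LinearMap.mulLeft_apply, mulX_single, ofNormalForm_single,
        map_mul, aeval_X, mul_assoc]
  exact LinearMap.congr_fun this v

lemma ofNormalForm_mulSemi {s : ℂ} (hs : s ^ 2 = 1) (v : NormalForm) :
    ofNormalForm (mulSemi s v) = (y + s • z) * ofNormalForm v := by
  have : ofNormalForm ∘ₗ mulSemi s = LinearMap.mulLeft ℂ (y + s • z) ∘ₗ ofNormalForm := by
    refine linearMap_ext fun b c p => ?_
    simp only [LinearMap.comp_apply, LinearMap.mulLeft_apply, mulSemi_single, map_add, map_smul,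
      ofNormalForm_single]
    rw [← mul_assoc (y + s • z), mul_aeval_of_mul_eq (semiInvariant_mul_x hs), mul_assoc, add_mul,
      smul_mul_assoc, ← mul_assoc z, z_mul_y_pow, mul_add, ← mul_assoc y, ← pow_succ',
      smul_mul_assoc, smul_smul, mul_smul_comm, mul_assoc (y ^ b) z, ← pow_succ']
  exact LinearMap.congr_fun this v

lemma ofNormalForm_surjective : Function.Surjective ofNormalForm := by
  rw [← LinearMap.range_eq_top]
  refine eq_top_of_adjoin_eq_top_of_mul_mem adjoin_generators
    ⟨Finsupp.single (0, 0) 1, by simp [ofNormalForm_single]⟩ ?_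
  rintro _ (rfl | rfl | rfl) _ ⟨v, rfl⟩
  · exact ⟨mulX v, ofNormalForm_mulX v⟩
  · refine ⟨(1 / 2 : ℂ) • (mulSemi 1 v + mulSemi (-1) v), ?_⟩
    rw [map_smul, map_add, ofNormalForm_mulSemi (one_pow 2), ofNormalForm_mulSemi neg_one_sq,
      ← add_mul, ← smul_mul_assoc]
    congr 1
    module
  · refine ⟨(1 / 2 : ℂ) • (mulSemi 1 v - mulSemi (-1) v), ?_⟩
    rw [map_smul, map_sub, ofNormalForm_mulSemi (one_pow 2), ofNormalForm_mulSemi neg_one_sq,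
      ← sub_mul, ← smul_mul_assoc]
    congr 1
    module

/-- The Poincaré–Birkhoff–Witt theorem for the color algebra: the `x ^ a * y ^ b * z ^ c` form a
basis. -/
noncomputable def normalFormEquiv : NormalForm ≃ₗ[ℂ] ColorAlgebra :=
  LinearEquiv.ofBijective ofNormalForm ⟨ofNormalForm_injective, ofNormalForm_surjective⟩

/-- The coefficient of `y ^ b * z ^ c` in the normal form, a polynomial in `x`. -/
noncomputable def coeff (b c : ℕ) : ColorAlgebra →ₗ[ℂ] ℂ[X] :=
  Finsupp.lapply (b, c) ∘ₗ normalFormEquiv.symm.toLinearMap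

lemma normalFormEquiv_single (b c : ℕ) (p : ℂ[X]) :
    normalFormEquiv (Finsupp.single (b, c) p) = aeval x p * (y ^ b * z ^ c) :=
  ofNormalForm_single b c p

lemma coeff_aeval_mul_pow_mul_pow (b c b' c' : ℕ) (p : ℂ[X]) :
    coeff b c (aeval x p * (y ^ b' * z ^ c')) = if b' = b ∧ c' = c then p else 0 := by
  rw [← normalFormEquiv_single, coeff, LinearMap.comp_apply, LinearEquiv.coe_coe,
    LinearEquiv.symm_apply_apply, Finsupp.lapply_apply, Finsupp.single_apply]
  simp only [Prod.mk.injEq]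

lemma linearMap_ext {M : Type*} [AddCommMonoid M] [Module ℂ M] {f g : ColorAlgebra →ₗ[ℂ] M}
    (h : ∀ (p : ℂ[X]) (b c : ℕ),
      f (aeval x p * (y ^ b * z ^ c)) = g (aeval x p * (y ^ b * z ^ c))) : f = g := by
  have comp_eq : f ∘ₗ normalFormEquiv.toLinearMap = g ∘ₗ normalFormEquiv.toLinearMap :=
    NormalForm.linearMap_ext fun b c p => by
      simpa only [LinearMap.comp_apply, LinearEquiv.coe_coe, normalFormEquiv_single] using h p b c
  ext a
  simpa using LinearMap.congr_fun comp_eq (normalFormEquiv.symm a)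

lemma eq_top_of_monomials_mem {S : Submodule ℂ ColorAlgebra}
    (h : ∀ (p : ℂ[X]) (b c : ℕ), aeval x p * (y ^ b * z ^ c) ∈ S) : S = ⊤ := by
  rw [← Submodule.ker_mkQ S, LinearMap.ker_eq_top]
  exact linearMap_ext fun p b c => by simpa using h p b c

lemma eq_zero_of_coeff_eq_zero {a : ColorAlgebra} (h : ∀ b c, coeff b c a = 0) : a = 0 :=
  normalFormEquiv.symm.map_eq_zero_iff.1 (Finsupp.ext fun bc => h bc.1 bc.2)

/-! ### The Koszul resolution -/

lemma z_pow_mul_y (c : ℕ) : z ^ c * y = (-1 : ℂ) ^ c • (y * z ^ c) := by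
  induction c with
  | zero => simp
  | succ c ih =>
    rw [pow_succ', mul_assoc, ih, mul_smul_comm, ← mul_assoc, z_mul_y, neg_mul, mul_assoc,
      pow_succ, mul_neg_one, neg_smul, smul_neg]

lemma aeval_mul_pow_mul_pow_mul_z (p : ℂ[X]) (b c : ℕ) :
    aeval x p * (y ^ b * z ^ c) * z = aeval x p * (y ^ b * z ^ (c + 1)) := by
  simp only [pow_succ, mul_assoc]

lemma aeval_mul_pow_mul_pow_mul_y (p : ℂ[X]) (b c : ℕ) :
    aeval x p * (y ^ b * z ^ c) * y = (-1 : ℂ) ^ c • (aeval x p * (y ^ (b + 1) * z ^ c)) := by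
  rw [mul_assoc, mul_assoc, z_pow_mul_y, mul_smul_comm, mul_smul_comm, pow_succ, mul_assoc (y ^ b)]

lemma coeff_succ_mul_z (b c : ℕ) (a : ColorAlgebra) : coeff b (c + 1) (a * z) = coeff b c a := by
  have : coeff b (c + 1) ∘ₗ LinearMap.mulRight ℂ z = coeff b c :=
    linearMap_ext fun p b' c' => by
      simp [aeval_mul_pow_mul_pow_mul_z, coeff_aeval_mul_pow_mul_pow]
  exact LinearMap.congr_fun this a

lemma coeff_zero_mul_z (b : ℕ) (a : ColorAlgebra) : coeff b 0 (a * z) = 0 := by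
  have : coeff b 0 ∘ₗ LinearMap.mulRight ℂ z = 0 :=
    linearMap_ext fun p b' c' => by
      simp [aeval_mul_pow_mul_pow_mul_z, coeff_aeval_mul_pow_mul_pow]
  exact LinearMap.congr_fun this a

lemma coeff_succ_zero_mul_y (b : ℕ) (a : ColorAlgebra) :
    coeff (b + 1) 0 (a * y) = coeff b 0 a := by
  have : coeff (b + 1) 0 ∘ₗ LinearMap.mulRight ℂ y = coeff b 0 :=
    linearMap_ext fun p b' c' => by
      rw [LinearMap.comp_apply, LinearMap.mulRight_apply, aeval_mul_pow_mul_pow_mul_y, map_smul,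
        coeff_aeval_mul_pow_mul_pow, coeff_aeval_mul_pow_mul_pow]
      rcases c' with _ | c' <;> simp
  exact LinearMap.congr_fun this a

lemma exists_mul_z_eq_of_coeff_zero_eq_zero {a : ColorAlgebra} (h : ∀ b, coeff b 0 a = 0) :
    ∃ r, r * z = a := by
  rw [← Ideal.mem_span_singleton', ← normalFormEquiv.apply_symm_apply a,
    ← Finsupp.sum_single (normalFormEquiv.symm a), Finsupp.sum, map_sum]
  refine sum_mem fun ⟨b, c⟩ _ => ?_
  rw [normalFormEquiv_single]
  cases c with
  | zero =>
    have coeff_eq : normalFormEquiv.symm a (b, 0) = 0 := h b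
    simp [coeff_eq]
  | succ c =>
    rw [← aeval_mul_pow_mul_pow_mul_z]
    exact Ideal.mul_mem_left _ _ (Ideal.mem_span_singleton_self z)

lemma eq_zero_of_mul_z_eq_zero {a : ColorAlgebra} (h : a * z = 0) : a = 0 :=
  eq_zero_of_coeff_eq_zero fun b c => by rw [← coeff_succ_mul_z, h, map_zero]

lemma exists_of_mul_y_add_mul_z_eq_zero {a b : ColorAlgebra} (h : a * y + b * z = 0) :
    ∃ r, a = r * z ∧ b = r * y := by
  obtain ⟨r, rfl⟩ := exists_mul_z_eq_of_coeff_zero_eq_zero fun n => by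
    simpa [coeff_succ_zero_mul_y, coeff_zero_mul_z] using congrArg (coeff (n + 1) 0) h
  refine ⟨r, rfl, sub_eq_zero.1 (eq_zero_of_mul_z_eq_zero ?_)⟩
  rw [sub_mul, ← h, mul_assoc, mul_assoc, z_mul_y]
  noncomm_ring

/-- The quotient map of the color algebra by the two-sided ideal generated by `y` and `z`. -/
noncomputable def toPolynomial : ColorAlgebra →ₐ[ℂ] ℂ[X] :=
  lift X 0 0 (by simp) (by simp) (by simp)

lemma toPolynomial_x : toPolynomial x = X :=
  lift_x _ _ _

lemma toPolynomial_y : toPolynomial y = 0 :=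
  lift_y _ _ _

lemma toPolynomial_z : toPolynomial z = 0 :=
  lift_z _ _ _

lemma sub_aeval_toPolynomial_mem_span (a : ColorAlgebra) :
    a - aeval x (toPolynomial a) ∈ Ideal.span {y, z} := by
  let f : ColorAlgebra →ₗ[ℂ] ColorAlgebra :=
    LinearMap.id - (aeval x).toLinearMap ∘ₗ toPolynomial.toLinearMap
  suffices ((Ideal.span {y, z}).restrictScalars ℂ).comap f = ⊤ from
    (this ▸ Submodule.mem_top : a ∈ ((Ideal.span {y, z}).restrictScalars ℂ).comap f)
  refine eq_top_of_monomials_mem fun p b c => ?_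
  have f_apply : f (aeval x p * (y ^ b * z ^ c)) = aeval x p * (y ^ b * z ^ c) -
      aeval x (p * (0 ^ b * 0 ^ c)) := by
    simp [f, toPolynomial_y, toPolynomial_z, ← aeval_algHom_apply, toPolynomial_x]
  rw [Submodule.mem_comap, f_apply, Submodule.restrictScalars_mem]
  rcases c with _ | c
  · rcases b with _ | b
    · simp
    · have mem : aeval x p * y ^ b * y ∈ Ideal.span {y, z} :=
        Ideal.mul_mem_left _ _ (Ideal.subset_span (Set.mem_insert y {z}))
      simpa [pow_succ, mul_assoc] using mem
  · have mem : aeval x p * (y ^ b * z ^ c) * z ∈ Ideal.span {y, z} :=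
      Ideal.mul_mem_left _ _ (Ideal.subset_span (Set.mem_insert_of_mem y rfl))
    simpa [pow_succ, mul_assoc] using mem

lemma exists_eq_aeval_toPolynomial_add (a : ColorAlgebra) :
    ∃ b c, a = aeval x (toPolynomial a) + b * y + c * z := by
  obtain ⟨b, c, h⟩ := Ideal.mem_span_pair.1 (sub_aeval_toPolynomial_mem_span a)
  exact ⟨b, c, by rw [add_assoc, h, add_sub_cancel]⟩

lemma exists_of_mul_x_add_mul_y_add_mul_z_eq_zero {a b c : ColorAlgebra}
    (h : a * x + b * y + c * z = 0) :
    ∃ p q r, a = p * y + q * z ∧ b = p * x - q + r * z ∧ c = -p + q * x + r * y := by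
  obtain ⟨p, q, ha⟩ := exists_eq_aeval_toPolynomial_add a
  have toPolynomial_eq : toPolynomial a = 0 := by
    simpa [toPolynomial_x, toPolynomial_y, toPolynomial_z] using congrArg toPolynomial h
  rw [toPolynomial_eq, map_zero, zero_add] at ha
  have h' : (b - (p * x - q)) * y + (c - (-p + q * x)) * z = 0 := by
    rw [← h, ha, add_mul (p * y), mul_assoc p y, mul_assoc q z, y_mul_x, z_mul_x]
    noncomm_ring
  obtain ⟨r, hb, hc⟩ := exists_of_mul_y_add_mul_z_eq_zero h'
  exact ⟨p, q, r, ha, sub_eq_iff_eq_add'.1 hb, sub_eq_iff_eq_add'.1 hc⟩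

open Matrix

/-- The generators, as the differential `R ^ 3 → R` of the Koszul resolution. -/
noncomputable def koszulMatrix₁ : Matrix (Fin 3) (Fin 1) ColorAlgebra :=
  !![x; y; z]

/-- The relations, as the differential `R ^ 3 → R ^ 3` of the Koszul resolution: each row lists the
left coefficients of `x`, `y` and `z` in one of the three defining relations. -/
noncomputable def koszulMatrix₂ : Matrix (Fin 3) (Fin 3) ColorAlgebra :=
  !![y, x, -1;
     z, -1, x;
     0, z, y]

/-- The differential `R → R ^ 3` of the Koszul resolution. -/
noncomputable def koszulMatrix₃ : Matrix (Fin 1) (Fin 3) ColorAlgebra :=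
  !![z, y, x]

lemma vecMul_koszulMatrix₁ (v : Fin 3 → ColorAlgebra) :
    v ᵥ* koszulMatrix₁ = ![v 0 * x + v 1 * y + v 2 * z] := by
  ext i
  fin_cases i
  simp [koszulMatrix₁, vecMul, dotProduct, Fin.sum_univ_three]

lemma vecMul_koszulMatrix₂ (v : Fin 3 → ColorAlgebra) :
    v ᵥ* koszulMatrix₂ = ![v 0 * y + v 1 * z, v 0 * x - v 1 + v 2 * z,
      -v 0 + v 1 * x + v 2 * y] := by
  ext i
  fin_cases i <;> simp [koszulMatrix₂, vecMul, dotProduct, Fin.sum_univ_three, sub_eq_add_neg]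

lemma vecMul_koszulMatrix₃ (v : Fin 1 → ColorAlgebra) :
    v ᵥ* koszulMatrix₃ = ![v 0 * z, v 0 * y, v 0 * x] := by
  ext i
  fin_cases i <;> simp [koszulMatrix₃, vecMul, dotProduct]

lemma koszulMatrix₂_mul_koszulMatrix₁ : koszulMatrix₂ * koszulMatrix₁ = 0 := by
  refine funext fun i => (mul_apply_eq_vecMul _ _ i).trans ?_
  change _ = (0 : Fin _ → ColorAlgebra)
  rw [vecMul_koszulMatrix₁]
  fin_cases i <;> simp only [koszulMatrix₂]
  · simp [y_mul_x]
  · simp [z_mul_x, ← sub_eq_add_neg]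
  · simp [z_mul_y]

lemma koszulMatrix₃_mul_koszulMatrix₂ : koszulMatrix₃ * koszulMatrix₂ = 0 := by
  refine funext fun i => (mul_apply_eq_vecMul _ _ i).trans ?_
  change _ = (0 : Fin _ → ColorAlgebra)
  rw [vecMul_koszulMatrix₂]
  fin_cases i
  simp [koszulMatrix₃, y_mul_x, z_mul_x, z_mul_y, neg_add_eq_sub]

lemma exists_vecMul_koszulMatrix₂_eq {v : Fin 3 → ColorAlgebra} (h : v ᵥ* koszulMatrix₁ = 0) :
    ∃ w, w ᵥ* koszulMatrix₂ = v := by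
  rw [vecMul_koszulMatrix₁] at h
  obtain ⟨p, q, r, h₀, h₁, h₂⟩ := exists_of_mul_x_add_mul_y_add_mul_z_eq_zero (congrFun h 0)
  refine ⟨![p, q, r], ?_⟩
  ext i
  fin_cases i <;> simp [vecMul_koszulMatrix₂, h₀, h₁, h₂]

lemma exists_vecMul_koszulMatrix₃_eq {v : Fin 3 → ColorAlgebra} (h : v ᵥ* koszulMatrix₂ = 0) :
    ∃ w, w ᵥ* koszulMatrix₃ = v := by
  rw [vecMul_koszulMatrix₂] at h
  obtain ⟨r, h₀, h₁⟩ := exists_of_mul_y_add_mul_z_eq_zero (congrFun h 0)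
  have mul_z_eq_zero : (v 2 - r * x) * z = 0 := by
    have h' : v 0 * x - v 1 + v 2 * z = 0 := congrFun h 1
    rw [← h', h₀, h₁, mul_assoc r z x, z_mul_x]
    noncomm_ring
  have h₂ : v 2 = r * x := sub_eq_zero.1 (eq_zero_of_mul_z_eq_zero mul_z_eq_zero)
  refine ⟨![r], ?_⟩
  ext i
  fin_cases i <;> simp [vecMul_koszulMatrix₃, h₀, h₁, h₂]

lemma eq_zero_of_vecMul_koszulMatrix₃_eq_zero {v : Fin 1 → ColorAlgebra}
    (h : v ᵥ* koszulMatrix₃ = 0) : v = 0 := by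
  rw [vecMul_koszulMatrix₃] at h
  ext i
  fin_cases i
  exact eq_zero_of_mul_z_eq_zero (congrFun h 0)

section Augmentation

variable {ε : ColorAlgebra →ₐ[ℂ] ℂ}

lemma exists_of_augmentation_eq_zero (hx : ε x = 0) (hy : ε y = 0) (hz : ε z = 0)
    {a : ColorAlgebra} (ha : ε a = 0) : ∃ p q r, a = p * x + q * y + r * z := by
  obtain ⟨q, r, h⟩ := exists_eq_aeval_toPolynomial_add a
  generalize toPolynomial a = f at h
  subst h
  have coeff_zero : f.coeff 0 = 0 := by
    simpa [hx, hy, hz, ← aeval_algHom_apply, coeff_zero_eq_aeval_zero] using ha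
  refine ⟨aeval x f.divX, q, r, ?_⟩
  conv_lhs => rw [← f.divX_mul_X_add, coeff_zero]
  simp

lemma exists_vecMul_koszulMatrix₁_eq (hx : ε x = 0) (hy : ε y = 0) (hz : ε z = 0)
    {v : Fin 1 → ColorAlgebra} (h : ε (v 0) = 0) : ∃ w, w ᵥ* koszulMatrix₁ = v := by
  obtain ⟨p, q, r, hv⟩ := exists_of_augmentation_eq_zero hx hy hz h
  refine ⟨![p, q, r], ?_⟩
  ext i
  fin_cases i
  simp [vecMul_koszulMatrix₁, hv]

lemma koszulMatrix₁_map_augmentation (hx : ε x = 0) (hy : ε y = 0) (hz : ε z = 0) :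
    koszulMatrix₁.map ε = 0 := by
  ext i j
  fin_cases i <;> fin_cases j <;> simp [koszulMatrix₁, hx, hy, hz]

lemma koszulMatrix₂_map_augmentation (hx : ε x = 0) (hy : ε y = 0) (hz : ε z = 0) :
    koszulMatrix₂.map ε = !![0, 0, -1; 0, -1, 0; 0, 0, 0] := by
  ext i j
  fin_cases i <;> fin_cases j <;> simp [koszulMatrix₂, hx, hy, hz]

lemma koszulMatrix₃_map_augmentation (hx : ε x = 0) (hy : ε y = 0) (hz : ε z = 0) :
    koszulMatrix₃.map ε = 0 := by
  ext i j
  fin_cases i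
  fin_cases j <;> simp [koszulMatrix₃, hx, hy, hz]

lemma rank_koszulMatrix₂_map_augmentation (hx : ε x = 0) (hy : ε y = 0) (hz : ε z = 0) :
    (koszulMatrix₂.map ε).rank = 2 := by
  have eq_submatrix : koszulMatrix₂.map ε =
      (diagonal ![-1, -1, 0]).submatrix (Equiv.refl _) (Equiv.swap 0 2) := by
    rw [koszulMatrix₂_map_augmentation hx hy hz]
    ext i j
    fin_cases i <;> fin_cases j <;> simp [Equiv.swap_apply_def]
  rw [eq_submatrix, rank_submatrix, rank_diagonal, Fintype.card_subtype]
  simp [Fin.univ_succ, Finset.filter_insert, Finset.filter_singleton]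

/-- The Koszul resolution `0 → R → R ^ 3 → R ^ 3 → R → ℂ` of the trivial module. -/
noncomputable def koszulResolution (hx : ε x = 0) (hy : ε y = 0) (hz : ε z = 0) :
    FreeResolution ε where
  rank
    | 0 => 1
    | 1 => 3
    | 2 => 3
    | 3 => 1
    | _ + 4 => 0
  diff
    | 0 => koszulMatrix₁
    | 1 => koszulMatrix₂
    | 2 => koszulMatrix₃
    | _ + 3 => 0
  aug := 1
  aug_ne_zero := one_ne_zero
  map_diff_zero_mulVec_aug := by
    simp [koszulMatrix₁_map_augmentation hx hy hz]
  diff_mul_diff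
    | 0 => koszulMatrix₂_mul_koszulMatrix₁
    | 1 => koszulMatrix₃_mul_koszulMatrix₂
    | _ + 2 => Matrix.zero_mul _
  exact_zero v hv := exists_vecMul_koszulMatrix₁_eq hx hy hz (by simpa [dotProduct] using hv)
  exact_succ
    | 0, _, hv => exists_vecMul_koszulMatrix₂_eq hv
    | 1, _, hv => exists_vecMul_koszulMatrix₃_eq hv
    | 2, _, hv => ⟨0, by simp [eq_zero_of_vecMul_koszulMatrix₃_eq_zero hv]⟩
    | _ + 3, _, _ => ⟨0, Subsingleton.elim _ _⟩

lemma finrank_trivialExt_eq_one (hx : ε x = 0) (hy : ε y = 0) (hz : ε z = 0)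
    {n : ℕ} (hn : n ≤ 3) : Module.finrank ℂ (trivialExt ε n) = 1 := by
  let F := koszulResolution hx hy hz
  have rank_zero : ((F.diff 0).map ε).rank = 0 :=
    (congrArg rank (koszulMatrix₁_map_augmentation hx hy hz)).trans Matrix.rank_zero
  have rank_one : ((F.diff 1).map ε).rank = 2 := rank_koszulMatrix₂_map_augmentation hx hy hz
  have rank_two : ((F.diff 2).map ε).rank = 0 :=
    (congrArg rank (koszulMatrix₃_map_augmentation hx hy hz)).trans Matrix.rank_zero
  have rank_three : ((F.diff 3).map ε).rank = 0 := Nat.le_zero.1 (rank_le_height _)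
  have h₀ : Module.finrank ℂ (trivialExt ε 0) + ((F.diff 0).map ε).rank = 1 :=
    F.finrank_trivialExt_zero_add_rank
  have h₁ : Module.finrank ℂ (trivialExt ε 1) + ((F.diff 0).map ε).rank +
      ((F.diff 1).map ε).rank = 3 := F.finrank_trivialExt_succ_add_rank_add_rank 0
  have h₂ : Module.finrank ℂ (trivialExt ε 2) + ((F.diff 1).map ε).rank +
      ((F.diff 2).map ε).rank = 3 := F.finrank_trivialExt_succ_add_rank_add_rank 1
  have h₃ : Module.finrank ℂ (trivialExt ε 3) + ((F.diff 2).map ε).rank +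
      ((F.diff 3).map ε).rank = 1 := F.finrank_trivialExt_succ_add_rank_add_rank 2
  interval_cases n <;> omega

lemma finrank_trivialExt_eq_zero (hx : ε x = 0) (hy : ε y = 0) (hz : ε z = 0)
    {n : ℕ} (hn : 4 ≤ n) : Module.finrank ℂ (trivialExt ε n) = 0 := by
  obtain ⟨m, rfl⟩ := Nat.exists_eq_add_of_le' hn
  have h : Module.finrank ℂ (trivialExt ε (m + 4)) + _ + _ = 0 :=
    (koszulResolution hx hy hz).finrank_trivialExt_succ_add_rank_add_rank (m + 3)
  omega

end Augmentation

end ColorAlgebra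

theorem betti_numbers (ε : RingQuot CRel →ₐ[ℂ] ℂ)
    (hε : ∀ i : Fin 3, ε (RingQuot.mkAlgHom ℂ CRel (ι ℂ i)) = 0) :
    extDim (RingQuot CRel) ε 0 = 1 ∧ extDim (RingQuot CRel) ε 1 = 1 ∧
    extDim (RingQuot CRel) ε 2 = 1 ∧ extDim (RingQuot CRel) ε 3 = 1 ∧
    ∀ n ≥ 4, extDim (RingQuot CRel) ε n = 0 := by
  have eq_one {n : ℕ} (hn : n ≤ 3) : extDim (RingQuot CRel) ε n = 1 :=
    ColorAlgebra.finrank_trivialExt_eq_one (hε 0) (hε 1) (hε 2) hn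
  have eq_zero (n : ℕ) (hn : 4 ≤ n) : extDim (RingQuot CRel) ε n = 0 :=
    ColorAlgebra.finrank_trivialExt_eq_zero (hε 0) (hε 1) (hε 2) hn
  exact ⟨eq_one (by simp), eq_one (by simp), eq_one (by simp), eq_one le_rfl, eq_zero⟩
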